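/- arXiv:2403.03168 — 8 statements merged into one kernel-verified Lean document; each statement's English description precedes it below -/
import Mathlib

section
/- Let n ≥ 1, κ > 1, and let d, r ∈ ℝ^n have strictly positive entries. The function g(l) = Σ_{i ∈ A(l)} (d_i − r_i·l)² + Σ_{i ∈ B(l)} (d_i − κ·r_i·l)² is convex on ℝ. -/
open Finset

/-! Each summand, with its index condition absorbed, is the square of the positive part of an
affine function of `l`: `max 0 (r_i l - d_i) ^ 2` for the first sum and
`max 0 (d_i - κ r_i l) ^ 2` for the second. Such squares are convex, and so is their sum. -/

lemma convexOn_sq_posPart_affine (a b : ℝ) :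
    ConvexOn ℝ Set.univ (fun l : ℝ => (max 0 (a * l + b)) ^ 2) := by
  have haff : ConvexOn ℝ Set.univ (fun l : ℝ => a * l + b) := by
    refine ⟨convex_univ, fun x _ y _ s t _ _ hst => le_of_eq ?_⟩
    simp only [smul_eq_mul]
    linear_combination (-b) * hst
  have hmax : ConvexOn ℝ Set.univ (fun l : ℝ => max 0 (a * l + b)) :=
    (convexOn_const 0 convex_univ).sup haff
  exact hmax.pow (fun _ _ => le_max_left _ _) 2

lemma convexOn_finset_sum {ι : Type*} (s : Finset ι) (f : ι → ℝ → ℝ)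
    (hf : ∀ i, ConvexOn ℝ Set.univ (f i)) :
    ConvexOn ℝ Set.univ (fun l => ∑ i ∈ s, f i l) := by
  classical
  induction s using Finset.induction_on with
  | empty => simpa using convexOn_const (𝕜 := ℝ) (0 : ℝ) (convex_univ (E := ℝ))
  | insert i s hi ih =>
    simp only [Finset.sum_insert hi]
    exact (hf i).add ih

/-- The piecewise-quadratic function
`g(l) = Σ_{i ∈ A(l)} (d_i − r_i l)² + Σ_{i ∈ B(l)} (d_i − κ r_i l)²` is convex on `ℝ`. -/
theorem g_convex (n : ℕ) (hn : 1 ≤ n) (κ : ℝ) (hκ : 1 < κ)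
    (d r : Fin n → ℝ) (hd : ∀ i, 0 < d i) (hr : ∀ i, 0 < r i)
    (g : ℝ → ℝ)
    (hg : ∀ l : ℝ, g l =
      (∑ i ∈ Finset.univ.filter (fun i => d i ≤ l * r i), (d i - r i * l) ^ 2) +
      ∑ i ∈ Finset.univ.filter (fun i => κ * l * r i ≤ d i), (d i - κ * r i * l) ^ 2) :
    ConvexOn ℝ Set.univ g := by
  have hgeq : g = fun l => (∑ i, (max 0 (r i * l + -d i)) ^ 2) +
      ∑ i, (max 0 (-(κ * r i) * l + d i)) ^ 2 := by
    funext l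
    rw [hg l, Finset.sum_filter, Finset.sum_filter]
    congr 1
    · refine Finset.sum_congr rfl fun i _ => ?_
      split_ifs with h
      · rw [max_eq_right (by linarith)]; ring
      · rw [max_eq_left (by linarith)]; ring
    · refine Finset.sum_congr rfl fun i _ => ?_
      split_ifs with h
      · rw [max_eq_right (by linarith)]; ring
      · rw [max_eq_left (by linarith)]; ring
  rw [hgeq]
  exact (convexOn_finset_sum _ _ fun i => convexOn_sq_posPart_affine (r i) (-d i)).add
    (convexOn_finset_sum _ _ fun i => convexOn_sq_posPart_affine (-(κ * r i)) (d i))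
end

section
/- Let n ≥ 1, κ > 1, and let d, r ∈ ℝ^n have strictly positive entries. The function g is differentiable on ℝ with derivative g'(l) = 2 Σ_{i=1}^n r_i · [l·r_i − d_i]_+ − 2κ² Σ_{i=1}^n r_i · [d_i/κ − l·r_i]_+, equivalently g'(l) = 2 Σ_{i ∈ A(l)} r_i (r_i l − d_i) + 2κ Σ_{i ∈ B(l)} r_i (κ l r_i − d_i). -/
/-!
The square of the positive part `x ↦ (max 0 x)²` is `C¹` with derivative `2 max 0 x`: its first-order
Taylor remainder is at most `(y - x)²`, including across the kink at `0` (`hasDerivAt_sq_posPart`).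
Each term of `g` is such a square composed with an affine map, since the membership conditions
defining `A(l)` and `B(l)` say exactly that the argument of the positive part is nonnegative.
The chain rule and summation give the derivative; the second formula is the same termwise
identification of `max 0 _` with a conditional.
-/

open Finset

theorem hasDerivAt_sq_posPart (x : ℝ) :
    HasDerivAt (fun y : ℝ => (max 0 y) ^ 2) (2 * max 0 x) x := by
  rw [hasDerivAt_iff_isLittleO]
  have hO : (fun y : ℝ => (max 0 y) ^ 2 - (max 0 x) ^ 2 - (y - x) • (2 * max 0 x)) =O[nhds x]
      fun y => (y - x) ^ 2 := by
    refine Asymptotics.IsBigO.of_bound 1 (Filter.Eventually.of_forall fun y => ?_)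
    rw [Real.norm_eq_abs, Real.norm_eq_abs, abs_of_nonneg (sq_nonneg (y - x)), abs_le, smul_eq_mul]
    rcases le_total 0 x with hx | hx <;> rcases le_total 0 y with hy | hy <;>
      simp only [max_eq_left, max_eq_right, hx, hy] <;> constructor <;>
      nlinarith [sq_nonneg (y - x), sq_nonneg x, sq_nonneg y]
  refine hO.trans_isLittleO ?_
  have h := Asymptotics.isLittleO_pow_sub_sub x (m := 2) (by norm_num)
  simpa using h

/-- `g` is differentiable on `ℝ` with derivative
`g'(l) = 2 Σ_i r_i [l r_i − d_i]_+ − 2κ² Σ_i r_i [d_i/κ − l r_i]_+`, which equals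
`2 Σ_{i ∈ A(l)} r_i (r_i l − d_i) + 2κ Σ_{i ∈ B(l)} r_i (κ l r_i − d_i)`. -/
theorem g_hasDerivAt (n : ℕ) (hn : 1 ≤ n) (κ : ℝ) (hκ : 1 < κ)
    (d r : Fin n → ℝ) (hd : ∀ i, 0 < d i) (hr : ∀ i, 0 < r i)
    (g : ℝ → ℝ)
    (hg : ∀ l : ℝ, g l =
      (∑ i ∈ Finset.univ.filter (fun i => d i ≤ l * r i), (d i - r i * l) ^ 2) +
      ∑ i ∈ Finset.univ.filter (fun i => κ * l * r i ≤ d i), (d i - κ * r i * l) ^ 2) :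
    ∀ l : ℝ,
      HasDerivAt g
        (2 * (∑ i, r i * max 0 (l * r i - d i)) -
          2 * κ ^ 2 * ∑ i, r i * max 0 (d i / κ - l * r i)) l ∧
      2 * (∑ i, r i * max 0 (l * r i - d i)) -
          2 * κ ^ 2 * (∑ i, r i * max 0 (d i / κ - l * r i)) =
        2 * (∑ i ∈ Finset.univ.filter (fun i => d i ≤ l * r i), r i * (r i * l - d i)) +
          2 * κ * ∑ i ∈ Finset.univ.filter (fun i => κ * l * r i ≤ d i),
            r i * (κ * l * r i - d i) := by
  have hκ0 : 0 < κ := by linarith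
  have hA : ∀ (l : ℝ) (i : Fin n),
      max 0 (l * r i - d i) = if d i ≤ l * r i then l * r i - d i else 0 := by
    intro l i
    split_ifs with h
    · exact max_eq_right (by linarith)
    · exact max_eq_left (by linarith)
  have hB : ∀ (l : ℝ) (i : Fin n),
      max 0 (d i - κ * l * r i) = if κ * l * r i ≤ d i then d i - κ * l * r i else 0 := by
    intro l i
    split_ifs with h
    · exact max_eq_right (by linarith)
    · exact max_eq_left (by linarith)
  have hscale : ∀ (l : ℝ) (i : Fin n),
      κ * max 0 (d i / κ - l * r i) = max 0 (d i - κ * l * r i) := by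
    intro l i
    rw [mul_max_of_nonneg _ _ hκ0.le, mul_zero, mul_sub, mul_div_cancel₀ _ hκ0.ne', mul_assoc]
  have hgeq : g = fun l => ∑ i, ((max 0 (l * r i - d i)) ^ 2 + (max 0 (d i - κ * l * r i)) ^ 2) := by
    funext l
    rw [hg, Finset.sum_filter, Finset.sum_filter, ← Finset.sum_add_distrib]
    refine Finset.sum_congr rfl fun i _ => ?_
    rw [hA, hB]
    split_ifs <;> ring
  intro l
  constructor
  · have hterm : ∀ i ∈ (Finset.univ : Finset (Fin n)), HasDerivAt
        (fun l => (max 0 (l * r i - d i)) ^ 2 + (max 0 (d i - κ * l * r i)) ^ 2)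
        (2 * max 0 (l * r i - d i) * r i + 2 * max 0 (d i - κ * l * r i) * (-(κ * r i))) l := by
      intro i _
      have h1 : HasDerivAt (fun l : ℝ => l * r i - d i) (r i) l := by
        simpa using ((hasDerivAt_id l).mul_const (r i)).sub_const (d i)
      have h2 : HasDerivAt (fun l : ℝ => d i - κ * l * r i) (-(κ * r i)) l := by
        simpa using (((hasDerivAt_id l).const_mul κ).mul_const (r i)).const_sub (d i)
      exact ((hasDerivAt_sq_posPart _).comp l h1).add ((hasDerivAt_sq_posPart _).comp l h2)
    rw [hgeq]
    refine (HasDerivAt.fun_sum hterm).congr_deriv ?_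
    symm
    rw [Finset.mul_sum, Finset.mul_sum, ← Finset.sum_sub_distrib]
    refine Finset.sum_congr rfl fun i _ => ?_
    rw [← hscale]
    ring
  · rw [Finset.sum_filter, Finset.sum_filter, Finset.mul_sum, Finset.mul_sum, Finset.mul_sum,
      Finset.mul_sum, ← Finset.sum_sub_distrib, ← Finset.sum_add_distrib]
    refine Finset.sum_congr rfl fun i _ => ?_
    have h : 2 * κ ^ 2 * (r i * max 0 (d i / κ - l * r i)) =
        2 * κ * r i * (κ * max 0 (d i / κ - l * r i)) := by ring
    rw [h, hscale, hA, hB]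
    split_ifs <;> ring
end

section
/- Let n ≥ 1, κ > 1, and let d, r ∈ ℝ^n have strictly positive entries. If l* ∈ ℝ is a point with g'(l*) = 0 and A(l*) ∪ B(l*) is nonempty, then l* = (Σ_{i ∈ A(l*)} r_i d_i + κ Σ_{i ∈ B(l*)} r_i d_i) / (Σ_{i ∈ A(l*)} r_i² + κ² Σ_{i ∈ B(l*)} r_i²). -/
open Finset

/-!
The only analytic point is that `x ↦ (max x 0) ^ 2` is differentiable everywhere, with derivative
`2 * max x 0` (`hasDerivAt_max_zero_sq`). Since `g l` is the sum over all `i` of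
`(max (r i * l - d i) 0) ^ 2 + (max (d i - κ * r i * l) 0) ^ 2`, it can be differentiated termwise,
although the index sets move with `l`. Setting the derivative to zero gives an equation that is
linear in `l*` once the index sets at `l*` are fixed, and the coefficient of `l*` is positive
because some index set is nonempty.
-/

/-- The first-order Taylor error of `(max x 0) ^ 2` is at most `(y - x) ^ 2`, whatever the signs
of `x` and `y`, so the kink at `0` needs no separate treatment. -/
lemma hasDerivAt_max_zero_sq (x : ℝ) :
    HasDerivAt (fun y : ℝ => (max y 0) ^ 2) (2 * max x 0) x := by
  have hbound : ∀ y : ℝ,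
      |(max y 0) ^ 2 - (max x 0) ^ 2 - (y - x) * (2 * max x 0)| ≤ (y - x) ^ 2 := by
    intro y
    rw [abs_le]
    rcases le_total x 0 with hx | hx <;> rcases le_total y 0 with hy | hy <;>
      simp only [max_eq_left, max_eq_right, hx, hy] <;> constructor <;>
      nlinarith [sq_nonneg (y - x), sq_nonneg x, sq_nonneg y]
  rw [hasDerivAt_iff_isLittleO]
  have hO : (fun y : ℝ => (max y 0) ^ 2 - (max x 0) ^ 2 - (y - x) • (2 * max x 0))
      =O[nhds x] fun y => (y - x) ^ 2 := by
    refine Asymptotics.IsBigO.of_bound 1 (Filter.Eventually.of_forall fun y => ?_)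
    simpa using hbound y
  refine hO.trans_isLittleO ?_
  simpa using Asymptotics.isLittleO_pow_sub_sub x (m := 2) (by norm_num)

/-- If `l*` is a critical point of `g` with `A(l*) ∪ B(l*)` nonempty, then
`l* = (Σ_{i ∈ A(l*)} r_i d_i + κ Σ_{i ∈ B(l*)} r_i d_i) /
      (Σ_{i ∈ A(l*)} r_i² + κ² Σ_{i ∈ B(l*)} r_i²)`. -/
theorem critical_point_formula (n : ℕ) (hn : 1 ≤ n) (κ : ℝ) (hκ : 1 < κ)
    (d r : Fin n → ℝ) (hd : ∀ i, 0 < d i) (hr : ∀ i, 0 < r i)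
    (g : ℝ → ℝ)
    (hg : ∀ l : ℝ, g l =
      (∑ i ∈ Finset.univ.filter (fun i => d i ≤ l * r i), (d i - r i * l) ^ 2) +
      ∑ i ∈ Finset.univ.filter (fun i => κ * l * r i ≤ d i), (d i - κ * r i * l) ^ 2)
    (lstar : ℝ)
    (hcrit : deriv g lstar = 0)
    (hne : (Finset.univ.filter (fun i => d i ≤ lstar * r i) ∪
        Finset.univ.filter (fun i => κ * lstar * r i ≤ d i)).Nonempty) :
    lstar =
      ((∑ i ∈ Finset.univ.filter (fun i => d i ≤ lstar * r i), r i * d i) +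
          κ * ∑ i ∈ Finset.univ.filter (fun i => κ * lstar * r i ≤ d i), r i * d i) /
        ((∑ i ∈ Finset.univ.filter (fun i => d i ≤ lstar * r i), r i ^ 2) +
          κ ^ 2 * ∑ i ∈ Finset.univ.filter (fun i => κ * lstar * r i ≤ d i), r i ^ 2) := by
  have hg' : g = fun l => (∑ i, (max (r i * l - d i) 0) ^ 2) +
      ∑ i, (max (d i - κ * r i * l) 0) ^ 2 := by
    funext l
    rw [hg l, Finset.sum_filter, Finset.sum_filter]
    congr 1 <;> refine Finset.sum_congr rfl fun i _ => ?_
    · split_ifs with h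
      · rw [max_eq_left (by linarith)]; ring
      · rw [max_eq_right (by linarith)]; ring
    · split_ifs with h
      · rw [max_eq_left (by linarith)]
      · rw [max_eq_right (by linarith)]; ring
  have hderiv : HasDerivAt g ((∑ i, 2 * max (r i * lstar - d i) 0 * r i) +
      ∑ i, 2 * max (d i - κ * r i * lstar) 0 * (-(κ * r i))) lstar := by
    rw [hg']
    refine HasDerivAt.add (HasDerivAt.fun_sum fun i _ => ?_) (HasDerivAt.fun_sum fun i _ => ?_)
    · have h : HasDerivAt (fun l => r i * l - d i) (r i) lstar := by
        simpa using ((hasDerivAt_id lstar).const_mul (r i)).sub_const (d i)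
      exact (hasDerivAt_max_zero_sq (r i * lstar - d i)).comp lstar h
    · have h : HasDerivAt (fun l => d i - κ * r i * l) (-(κ * r i)) lstar := by
        simpa using ((hasDerivAt_id lstar).const_mul (κ * r i)).const_sub (d i)
      exact (hasDerivAt_max_zero_sq (d i - κ * r i * lstar)).comp lstar h
  rw [hderiv.deriv] at hcrit
  have hA : ∑ i, 2 * max (r i * lstar - d i) 0 * r i =
      2 * (lstar * (∑ i ∈ Finset.univ.filter (fun i => d i ≤ lstar * r i), r i ^ 2) -
        ∑ i ∈ Finset.univ.filter (fun i => d i ≤ lstar * r i), r i * d i) := by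
    rw [Finset.mul_sum, ← Finset.sum_sub_distrib, Finset.mul_sum, Finset.sum_filter]
    refine Finset.sum_congr rfl fun i _ => ?_
    split_ifs with h
    · rw [max_eq_left (by linarith)]; ring
    · rw [max_eq_right (by linarith)]; ring
  have hB : ∑ i, 2 * max (d i - κ * r i * lstar) 0 * (-(κ * r i)) =
      2 * (lstar * (κ ^ 2 *
          ∑ i ∈ Finset.univ.filter (fun i => κ * lstar * r i ≤ d i), r i ^ 2) -
        κ * ∑ i ∈ Finset.univ.filter (fun i => κ * lstar * r i ≤ d i), r i * d i) := by
    rw [Finset.mul_sum, Finset.mul_sum, Finset.mul_sum, ← Finset.sum_sub_distrib,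
      Finset.mul_sum, Finset.sum_filter]
    refine Finset.sum_congr rfl fun i _ => ?_
    split_ifs with h
    · rw [max_eq_left (by linarith)]; ring
    · rw [max_eq_right (by linarith)]; ring
  have hpos : 0 < (∑ i ∈ Finset.univ.filter (fun i => d i ≤ lstar * r i), r i ^ 2) +
      κ ^ 2 * ∑ i ∈ Finset.univ.filter (fun i => κ * lstar * r i ≤ d i), r i ^ 2 := by
    have hsum : ∀ s : Finset (Fin n), 0 ≤ ∑ i ∈ s, r i ^ 2 :=
      fun s => Finset.sum_nonneg fun i _ => sq_nonneg _
    have hsum_pos : ∀ s : Finset (Fin n), s.Nonempty → 0 < ∑ i ∈ s, r i ^ 2 :=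
      fun s hs => Finset.sum_pos (fun i _ => pow_pos (hr i) 2) hs
    have hκ2 : 0 < κ ^ 2 := by positivity
    rcases Finset.union_nonempty.mp hne with h | h
    · exact add_pos_of_pos_of_nonneg (hsum_pos _ h) (mul_nonneg hκ2.le (hsum _))
    · exact add_pos_of_nonneg_of_pos (hsum _) (mul_pos hκ2 (hsum_pos _ h))
  rw [eq_div_iff hpos.ne']
  rw [hA, hB] at hcrit
  linarith
end

section
/- Let n ≥ 1, κ > 1, and let d, r ∈ ℝ^n have strictly positive entries. Write (d/r)_min = min_i d_i/r_i and (d/r)_max = max_i d_i/r_i, and assume (d/r)_max / (d/r)_min > κ. Then the sets B((d/r)_min) and A((d/r)_max / κ) are nonempty, g'((d/r)_min) < 0, and g'((d/r)_max / κ) > 0; consequently every critical point of g lies in the open interval ((d/r)_min, (d/r)_max / κ). -/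
/-!
With `x⁺ = max x 0`, the function is `g l = ∑ i, ((r i * l - d i)⁺ ^ 2 + (d i - κ * r i * l)⁺ ^ 2)`,
because the index sets `A(l)` and `B(l)` only select the terms with nonnegative argument. The square
of the positive part is differentiable with derivative `2 * x⁺` (`hasDerivAt_posPart_sq`), so
`g' l = ∑ i, (2 * (r i * l - d i)⁺ * r i - 2 * (d i - κ * r i * l)⁺ * (κ * r i))`.

For `l ≤ (d/r)_min` every term `(r i * l - d i)⁺` vanishes, while the index attaining `(d/r)_max`
contributes a strictly negative summand; hence `g' l < 0`. Symmetrically, for `l ≥ (d/r)_max / κ`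
every term `(d i - κ * r i * l)⁺` vanishes and the index attaining `(d/r)_min` makes `g' l > 0`.
So `g'` has no zero outside the open interval.
-/

open Finset

/-- The remainder of the first-order expansion at `y` is bounded by `(x - y) ^ 2`, which covers
the kink `y = 0` together with all other points. -/
lemma hasDerivAt_posPart_sq (y : ℝ) :
    HasDerivAt (fun x : ℝ => (max x 0) ^ 2) (2 * max y 0) y := by
  rw [hasDerivAt_iff_isLittleO]
  refine Asymptotics.IsBigO.trans_isLittleO ?_
    (Asymptotics.isLittleO_pow_sub_sub y (m := 2) (by norm_num))
  refine Asymptotics.IsBigO.of_bound 1 (Filter.Eventually.of_forall fun x => ?_)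
  simp only [Real.norm_eq_abs, smul_eq_mul, one_mul, sq_abs]
  rw [abs_of_nonneg (sq_nonneg (x - y)), abs_le]
  rcases max_cases x 0 with ⟨h1, h2⟩ | ⟨h1, h2⟩ <;>
  rcases max_cases y 0 with ⟨h3, h4⟩ | ⟨h3, h4⟩ <;> rw [h1, h3] <;>
  constructor <;> nlinarith [sq_nonneg (x - y), sq_nonneg x, sq_nonneg y]

/-- If `(d/r)_max / (d/r)_min > κ` then `B((d/r)_min)` and `A((d/r)_max/κ)` are nonempty,
`g'((d/r)_min) < 0`, `g'((d/r)_max/κ) > 0`, and every critical point of `g` lies in the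
open interval `((d/r)_min, (d/r)_max/κ)`. -/
theorem critical_points_localization (n : ℕ) (hn : 1 ≤ n) (κ : ℝ) (hκ : 1 < κ)
    (d r : Fin n → ℝ) (hd : ∀ i, 0 < d i) (hr : ∀ i, 0 < r i)
    (g : ℝ → ℝ)
    (hg : ∀ l : ℝ, g l =
      (∑ i ∈ Finset.univ.filter (fun i => d i ≤ l * r i), (d i - r i * l) ^ 2) +
      ∑ i ∈ Finset.univ.filter (fun i => κ * l * r i ≤ d i), (d i - κ * r i * l) ^ 2)
    (lmin lmax : ℝ)
    (hlmin : IsLeast (Set.range fun i => d i / r i) lmin)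
    (hlmax : IsGreatest (Set.range fun i => d i / r i) lmax)
    (hratio : κ < lmax / lmin) :
    (Finset.univ.filter (fun i => κ * lmin * r i ≤ d i)).Nonempty ∧
    (Finset.univ.filter (fun i => d i ≤ lmax / κ * r i)).Nonempty ∧
    deriv g lmin < 0 ∧
    0 < deriv g (lmax / κ) ∧
    ∀ l : ℝ, deriv g l = 0 → lmin < l ∧ l < lmax / κ := by
  have hg' : g = fun l => ∑ i, ((max (r i * l - d i) 0) ^ 2 + (max (d i - κ * r i * l) 0) ^ 2) := by
    funext l
    rw [hg l, Finset.sum_filter, Finset.sum_filter, ← Finset.sum_add_distrib]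
    refine Finset.sum_congr rfl fun i _ => ?_
    congr 1
    · split_ifs with h
      · rw [max_eq_left (by linarith)]; ring
      · rw [max_eq_right (by linarith)]; ring
    · split_ifs with h
      · rw [max_eq_left (by linarith)]
      · rw [max_eq_right (by linarith)]; ring
  have hder : ∀ l, deriv g l = ∑ i, (2 * max (r i * l - d i) 0 * r i
      - 2 * max (d i - κ * r i * l) 0 * (κ * r i)) := by
    intro l
    rw [hg']
    apply HasDerivAt.deriv
    refine HasDerivAt.fun_sum fun i _ => ?_
    have h1 : HasDerivAt (fun l : ℝ => r i * l - d i) (r i) l := by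
      simpa using ((hasDerivAt_id l).const_mul (r i)).sub_const (d i)
    have h2 : HasDerivAt (fun l : ℝ => d i - κ * r i * l) (-(κ * r i)) l := by
      simpa using ((hasDerivAt_id l).const_mul (κ * r i)).const_sub (d i)
    have h3 := ((hasDerivAt_posPart_sq _).comp l h1).add ((hasDerivAt_posPart_sq _).comp l h2)
    rw [mul_neg, ← sub_eq_add_neg] at h3
    exact h3
  obtain ⟨⟨a, ha⟩, hmin⟩ := hlmin
  obtain ⟨⟨b, hb⟩, hmax⟩ := hlmax
  have hκ0 : 0 < κ := by linarith
  have hmin' : ∀ i, lmin * r i ≤ d i := fun i => (le_div_iff₀ (hr i)).1 (hmin ⟨i, rfl⟩)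
  have hmax' : ∀ i, d i ≤ lmax * r i := fun i => (div_le_iff₀ (hr i)).1 (hmax ⟨i, rfl⟩)
  have ha' : d a = lmin * r a := (div_eq_iff (hr a).ne').1 ha
  have hb' : d b = lmax * r b := (div_eq_iff (hr b).ne').1 hb
  have hpos : 0 < lmin := ha ▸ div_pos (hd a) (hr a)
  have hlt : κ * lmin < lmax := (lt_div_iff₀ hpos).1 hratio
  have hlt' : lmin < lmax / κ := by rw [lt_div_iff₀ hκ0]; linarith
  have hneg : ∀ l, l ≤ lmin → deriv g l < 0 := by
    intro l hl
    have h0 : ∀ i, max (r i * l - d i) 0 = 0 := fun i =>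
      max_eq_right (by nlinarith [hmin' i, mul_le_mul_of_nonneg_right hl (hr i).le])
    rw [hder l]
    refine Finset.sum_neg' (fun i _ => ?_) ⟨b, Finset.mem_univ b, ?_⟩
    · have h2 : 0 ≤ 2 * max (d i - κ * r i * l) 0 * (κ * r i) :=
        mul_nonneg (by positivity) (mul_pos hκ0 (hr i)).le
      rw [h0 i]; linarith
    · have h1 : κ * l < lmax := lt_of_le_of_lt (mul_le_mul_of_nonneg_left hl hκ0.le) hlt
      have h2 : 0 < d b - κ * r b * l := by
        rw [hb']; linarith [mul_lt_mul_of_pos_right h1 (hr b)]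
      have h3 := mul_pos (mul_pos two_pos h2) (mul_pos hκ0 (hr b))
      rw [h0 b, max_eq_left h2.le]; linarith
  have hposd : ∀ l, lmax / κ ≤ l → 0 < deriv g l := by
    intro l hl
    have hl' : lmax ≤ l * κ := (div_le_iff₀ hκ0).1 hl
    have h0 : ∀ i, max (d i - κ * r i * l) 0 = 0 := fun i =>
      max_eq_right (by linarith [hmax' i, mul_le_mul_of_nonneg_right hl' (hr i).le])
    rw [hder l]
    refine Finset.sum_pos' (fun i _ => ?_) ⟨a, Finset.mem_univ a, ?_⟩
    · have h2 : 0 ≤ 2 * max (r i * l - d i) 0 * r i := mul_nonneg (by positivity) (hr i).le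
      rw [h0 i]; linarith
    · have h2 : 0 < r a * l - d a := by
        rw [ha']; linarith [mul_lt_mul_of_pos_right (hlt'.trans_le hl) (hr a)]
      have h3 := mul_pos (mul_pos two_pos h2) (hr a)
      rw [h0 a, max_eq_left h2.le]; linarith
  refine ⟨⟨b, ?_⟩, ⟨a, ?_⟩, hneg _ le_rfl, hposd _ le_rfl, fun l hl => ⟨?_, ?_⟩⟩
  · rw [Finset.mem_filter]
    exact ⟨Finset.mem_univ b, hb' ▸ mul_le_mul_of_nonneg_right hlt.le (hr b).le⟩
  · rw [Finset.mem_filter]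
    exact ⟨Finset.mem_univ a, ha' ▸ mul_le_mul_of_nonneg_right hlt'.le (hr a).le⟩
  · by_contra h
    exact (hneg l (not_lt.1 h)).ne hl
  · by_contra h
    exact (hposd l (not_lt.1 h)).ne' hl
end

section
/- Let n ≥ 1, and let d, r ∈ ℝ^n have strictly positive entries. For all l₁, l₂ ∈ ℝ: ⟨[l₁ r − d]_+ − [l₂ r − d]_+, (l₁ − l₂) r⟩ ≥ min{ Σ_{i ∈ A(l₁)} r_i², Σ_{i ∈ A(l₂)} r_i² } · (l₁ − l₂)², where A(l) = {i : d_i ≤ l·r_i}. -/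
/-!
The minimum is at most the sum over the active set `A(l) = {i : d i ≤ l * r i}` of the smaller
parameter, so it suffices to bound the inner product below with that sum
(`sum_sq_active_mul_le`). This holds coordinatewise: a coordinate active at the smaller parameter is
active at both, as `r > 0`, and contributes exactly `r i ^ 2 * (l₁ - l₂) ^ 2`; any other coordinate
contributes a product of two factors of equal sign, hence a nonnegative amount.
-/

open Finset

/-- The inequality for ordered parameters `a ≤ b`, with the active set of `a` in place of
the minimum. -/
lemma sum_sq_active_mul_le {n : ℕ} (d r : Fin n → ℝ) (hr : ∀ i, 0 < r i)
    {a b : ℝ} (hab : a ≤ b) :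
    (∑ i ∈ Finset.univ.filter (fun i => d i ≤ a * r i), r i ^ 2) * (b - a) ^ 2 ≤
      ∑ i, (max 0 (b * r i - d i) - max 0 (a * r i - d i)) * ((b - a) * r i) := by
  rw [Finset.sum_filter, Finset.sum_mul]
  refine Finset.sum_le_sum fun i _ => ?_
  have hmul : a * r i ≤ b * r i := mul_le_mul_of_nonneg_right hab (hr i).le
  split_ifs with h
  · rw [max_eq_right (by linarith), max_eq_right (by linarith)]
    exact le_of_eq (by ring)
  · rw [max_eq_left (a := (0 : ℝ)) (b := a * r i - d i) (by linarith), zero_mul, sub_zero]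
    exact mul_nonneg (le_max_left _ _) (mul_nonneg (by linarith) (hr i).le)

/-- `⟨[l₁ r − d]_+ − [l₂ r − d]_+, (l₁ − l₂) r⟩ ≥
min{Σ_{i ∈ A(l₁)} r_i², Σ_{i ∈ A(l₂)} r_i²} (l₁ − l₂)²` where `A(l) = {i : d_i ≤ l r_i}`. -/
theorem positive_part_monotonicity_A (n : ℕ) (hn : 1 ≤ n)
    (d r : Fin n → ℝ) (hd : ∀ i, 0 < d i) (hr : ∀ i, 0 < r i)
    (l₁ l₂ : ℝ) :
    ∑ i, (max 0 (l₁ * r i - d i) - max 0 (l₂ * r i - d i)) * ((l₁ - l₂) * r i) ≥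
      min (∑ i ∈ Finset.univ.filter (fun i => d i ≤ l₁ * r i), r i ^ 2)
          (∑ i ∈ Finset.univ.filter (fun i => d i ≤ l₂ * r i), r i ^ 2) *
        (l₁ - l₂) ^ 2 := by
  rcases le_total l₁ l₂ with h | h
  · refine le_trans (mul_le_mul_of_nonneg_right (min_le_left _ _) (sq_nonneg _)) ?_
    -- The inner product and the square are unchanged when the two parameters are swapped.
    have hswap : ∑ i, (max 0 (l₁ * r i - d i) - max 0 (l₂ * r i - d i)) * ((l₁ - l₂) * r i) =
        ∑ i, (max 0 (l₂ * r i - d i) - max 0 (l₁ * r i - d i)) * ((l₂ - l₁) * r i) :=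
      Finset.sum_congr rfl fun i _ => by ring
    rw [hswap, sub_sq_comm l₁ l₂]
    exact sum_sq_active_mul_le d r hr h
  · exact le_trans (mul_le_mul_of_nonneg_right (min_le_right _ _) (sq_nonneg _))
      (sum_sq_active_mul_le d r hr h)
end

section
/- Let n ≥ 1, κ > 1, and let d, r ∈ ℝ^n have strictly positive entries. For all l₁, l₂ ∈ ℝ: ⟨[d/κ − l₂ r]_+ − [d/κ − l₁ r]_+, (l₁ − l₂) r⟩ ≥ min{ Σ_{i ∈ B(l₁)} r_i², Σ_{i ∈ B(l₂)} r_i² } · (l₁ − l₂)², where B(l) = {i : d_i ≥ κ·l·r_i}. -/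
open Finset

/-!
By symmetry in `l₁, l₂`, let `l₁` be the larger parameter. On `B(l₁) ⊆ B(l₂)` both positive parts
are attained by their arguments, so the `i`-th term of the inner product equals
`r_i² (l₁ - l₂)²`; every other term is nonnegative because `l ↦ [d_i/κ - l r_i]_+` is antitone.
Hence the inner product is at least the sum over `B(l₁)`, which bounds the minimum
(`sum_active_le_inner_of_le`).
-/

/-- The ordered case, with the sum over the active set of the larger parameter. -/
lemma sum_active_le_inner_of_le {n : ℕ} {κ : ℝ} (hκ : 0 < κ) (d r : Fin n → ℝ)
    (hr : ∀ i, 0 < r i) {l₁ l₂ : ℝ} (h : l₂ ≤ l₁) :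
    (∑ i ∈ Finset.univ.filter (fun i => κ * l₁ * r i ≤ d i), r i ^ 2) * (l₁ - l₂) ^ 2 ≤
      ∑ i, (max 0 (d i / κ - l₂ * r i) - max 0 (d i / κ - l₁ * r i)) * ((l₁ - l₂) * r i) := by
  rw [Finset.sum_filter, Finset.sum_mul]
  refine Finset.sum_le_sum fun i _ => ?_
  have hmono : l₂ * r i ≤ l₁ * r i := mul_le_mul_of_nonneg_right h (hr i).le
  split_ifs with hi
  · have h₁ : l₁ * r i ≤ d i / κ := by
      rw [le_div_iff₀ hκ]
      linarith
    rw [max_eq_right (by linarith), max_eq_right (by linarith)]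
    exact le_of_eq (by ring)
  · rw [zero_mul]
    have hmax : max 0 (d i / κ - l₁ * r i) ≤ max 0 (d i / κ - l₂ * r i) :=
      max_le_max le_rfl (by linarith)
    exact mul_nonneg (sub_nonneg.2 hmax) (mul_nonneg (sub_nonneg.2 h) (hr i).le)

/-- `⟨[d/κ − l₂ r]_+ − [d/κ − l₁ r]_+, (l₁ − l₂) r⟩ ≥
min{Σ_{i ∈ B(l₁)} r_i², Σ_{i ∈ B(l₂)} r_i²} (l₁ − l₂)²` where `B(l) = {i : d_i ≥ κ l r_i}`. -/
theorem positive_part_monotonicity_B (n : ℕ) (hn : 1 ≤ n) (κ : ℝ) (hκ : 1 < κ)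
    (d r : Fin n → ℝ) (hd : ∀ i, 0 < d i) (hr : ∀ i, 0 < r i)
    (l₁ l₂ : ℝ) :
    ∑ i, (max 0 (d i / κ - l₂ * r i) - max 0 (d i / κ - l₁ * r i)) * ((l₁ - l₂) * r i) ≥
      min (∑ i ∈ Finset.univ.filter (fun i => κ * l₁ * r i ≤ d i), r i ^ 2)
          (∑ i ∈ Finset.univ.filter (fun i => κ * l₂ * r i ≤ d i), r i ^ 2) *
        (l₁ - l₂) ^ 2 := by
  have hκ₀ : 0 < κ := by linarith
  rcases le_total l₂ l₁ with h | h
  · exact (mul_le_mul_of_nonneg_right (min_le_left _ _) (sq_nonneg _)).trans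
      (sum_active_le_inner_of_le hκ₀ d r hr h)
  · refine (mul_le_mul_of_nonneg_right (min_le_right _ _) (sq_nonneg _)).trans ?_
    -- Exchanging `l₁` and `l₂` flips the sign of both factors of each term.
    have hswap := sum_active_le_inner_of_le hκ₀ d r hr h
    rw [sub_sq_comm l₂ l₁] at hswap
    exact hswap.trans_eq (Finset.sum_congr rfl fun i _ => by ring)
end

section
/- Let n ≥ 1, κ > 1, and let d, r ∈ ℝ^n have strictly positive entries. For all l₁, l₂ ∈ ℝ the derivative of g satisfies the strong monotonicity bound (g'(l₁) − g'(l₂))(l₁ − l₂) ≥ 2 [ min{ Σ_{i ∈ A(l₁)} r_i², Σ_{i ∈ A(l₂)} r_i² } + κ² min{ Σ_{i ∈ B(l₁)} r_i², Σ_{i ∈ B(l₂)} r_i² } ] (l₁ − l₂)². -/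
open Finset

lemma hasDerivAt_max_affine_sq (a b l : ℝ) :
    HasDerivAt (fun l : ℝ => (max (a * l + b) 0) ^ 2) (2 * a * max (a * l + b) 0) l := by
  have h : HasDerivAt (fun l : ℝ => a * l + b) a l := by
    simpa using ((hasDerivAt_id l).const_mul a).add_const b
  have hc := HasDerivAt.comp (h₂ := fun y : ℝ => (max y 0) ^ 2) l
    (hasDerivAt_max_zero_sq (a * l + b)) h
  rw [mul_right_comm] at hc
  exact hc

/-- Summed monotonicity of the terms `2 * a * (a * l + b)⁺`, with the exact slope kept for the
indices in a set `S` that are active at both points. -/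
lemma sum_max_affine_mono {n : ℕ} (a b : Fin n → ℝ) (l₁ l₂ : ℝ) (S : Finset (Fin n))
    (h₁ : ∀ i ∈ S, 0 ≤ a i * l₁ + b i) (h₂ : ∀ i ∈ S, 0 ≤ a i * l₂ + b i) :
    2 * (∑ i ∈ S, a i ^ 2) * (l₁ - l₂) ^ 2 ≤
      (∑ i, 2 * a i * max (a i * l₁ + b i) 0 - ∑ i, 2 * a i * max (a i * l₂ + b i) 0)
        * (l₁ - l₂) := by
  rw [← Finset.sum_sub_distrib, Finset.sum_mul, Finset.mul_sum, Finset.sum_mul]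
  calc _ = ∑ i ∈ S, (2 * a i * max (a i * l₁ + b i) 0 - 2 * a i * max (a i * l₂ + b i) 0)
        * (l₁ - l₂) := by
        refine Finset.sum_congr rfl fun i hi => ?_
        rw [max_eq_left (h₁ i hi), max_eq_left (h₂ i hi)]
        ring
    _ ≤ _ := by
        refine Finset.sum_le_sum_of_subset_of_nonneg (Finset.subset_univ S) fun i _ _ => ?_
        rcases le_total (a i * l₁ + b i) 0 with hx | hx <;>
          rcases le_total (a i * l₂ + b i) 0 with hy | hy <;>
          simp only [max_eq_left, max_eq_right, hx, hy] <;>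
          nlinarith [sq_nonneg (a i * (l₁ - l₂))]

/-- Strong monotonicity of the derivative of `g`:
`(g'(l₁) − g'(l₂))(l₁ − l₂) ≥ 2[min{Σ_{A(l₁)} r_i², Σ_{A(l₂)} r_i²}
  + κ² min{Σ_{B(l₁)} r_i², Σ_{B(l₂)} r_i²}](l₁ − l₂)²`. -/
theorem deriv_g_strong_monotonicity (n : ℕ) (hn : 1 ≤ n) (κ : ℝ) (hκ : 1 < κ)
    (d r : Fin n → ℝ) (hd : ∀ i, 0 < d i) (hr : ∀ i, 0 < r i)
    (g : ℝ → ℝ)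
    (hg : ∀ l : ℝ, g l =
      (∑ i ∈ Finset.univ.filter (fun i => d i ≤ l * r i), (d i - r i * l) ^ 2) +
      ∑ i ∈ Finset.univ.filter (fun i => κ * l * r i ≤ d i), (d i - κ * r i * l) ^ 2) :
    ∀ l₁ l₂ : ℝ,
      (deriv g l₁ - deriv g l₂) * (l₁ - l₂) ≥
        2 * (min (∑ i ∈ Finset.univ.filter (fun i => d i ≤ l₁ * r i), r i ^ 2)
              (∑ i ∈ Finset.univ.filter (fun i => d i ≤ l₂ * r i), r i ^ 2) +
            κ ^ 2 * min (∑ i ∈ Finset.univ.filter (fun i => κ * l₁ * r i ≤ d i), r i ^ 2)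
              (∑ i ∈ Finset.univ.filter (fun i => κ * l₂ * r i ≤ d i), r i ^ 2)) *
          (l₁ - l₂) ^ 2 := by
  have hg' : g = fun l => ∑ i, (max (r i * l + -d i) 0) ^ 2
      + ∑ i, (max (-(κ * r i) * l + d i) 0) ^ 2 := by
    funext l
    rw [hg, Finset.sum_filter, Finset.sum_filter]
    congr 1 <;> refine Finset.sum_congr rfl fun i _ => ?_
    · split_ifs with h
      · rw [max_eq_left (by linarith)]
        ring
      · rw [max_eq_right (by linarith)]
        ring
    · split_ifs with h
      · rw [max_eq_left (by linarith)]
        ring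
      · rw [max_eq_right (by linarith)]
        ring
  have hderiv : ∀ l, deriv g l = ∑ i, 2 * r i * max (r i * l + -d i) 0
      + ∑ i, 2 * -(κ * r i) * max (-(κ * r i) * l + d i) 0 := by
    intro l
    rw [hg']
    exact ((HasDerivAt.fun_sum fun i _ => hasDerivAt_max_affine_sq (r i) (-d i) l).add
      (HasDerivAt.fun_sum fun i _ => hasDerivAt_max_affine_sq (-(κ * r i)) (d i) l)).deriv
  intro l₁ l₂
  rw [hderiv, hderiv]
  -- `S` and `T` will be the smaller ones of the sets `A(l₁), A(l₂)` and `B(l₁), B(l₂)`.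
  have key : ∀ (S T : Finset (Fin n)) (m M : ℝ), m ≤ ∑ i ∈ S, r i ^ 2 → M ≤ ∑ i ∈ T, r i ^ 2 →
      (∀ i ∈ S, d i ≤ l₁ * r i ∧ d i ≤ l₂ * r i) →
      (∀ i ∈ T, κ * l₁ * r i ≤ d i ∧ κ * l₂ * r i ≤ d i) →
      2 * (m + κ ^ 2 * M) * (l₁ - l₂) ^ 2 ≤
      (∑ i, 2 * r i * max (r i * l₁ + -d i) 0
      + ∑ i, 2 * -(κ * r i) * max (-(κ * r i) * l₁ + d i) 0
      - (∑ i, 2 * r i * max (r i * l₂ + -d i) 0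
      + ∑ i, 2 * -(κ * r i) * max (-(κ * r i) * l₂ + d i) 0)) * (l₁ - l₂) := by
    intro S T m M hm hM hS hT
    have e₁ := sum_max_affine_mono r (fun i => -d i) l₁ l₂ S
      (fun i hi => by linarith [(hS i hi).1]) (fun i hi => by linarith [(hS i hi).2])
    have e₂ := sum_max_affine_mono (fun i => -(κ * r i)) d l₁ l₂ T
      (fun i hi => by linarith [(hT i hi).1]) (fun i hi => by linarith [(hT i hi).2])
    have e₃ : ∑ i ∈ T, (-(κ * r i)) ^ 2 = κ ^ 2 * ∑ i ∈ T, r i ^ 2 := by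
      rw [Finset.mul_sum]
      exact Finset.sum_congr rfl fun i _ => by ring
    have e₄ : 2 * (m + κ ^ 2 * M) * (l₁ - l₂) ^ 2 ≤
        2 * (∑ i ∈ S, r i ^ 2 + κ ^ 2 * ∑ i ∈ T, r i ^ 2) * (l₁ - l₂) ^ 2 := by
      gcongr
    simp only [e₃] at e₂
    linarith
  have monoA : ∀ {x y : ℝ} (i : Fin n), x ≤ y → x * r i ≤ y * r i := fun i h =>
    mul_le_mul_of_nonneg_right h (hr i).le
  have monoB : ∀ {x y : ℝ} (i : Fin n), x ≤ y → κ * x * r i ≤ κ * y * r i := fun i h =>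
    mul_le_mul_of_nonneg_right (mul_le_mul_of_nonneg_left h (by linarith)) (hr i).le
  rcases le_total l₁ l₂ with h | h
  · refine key _ _ _ _ (min_le_left _ _) (min_le_right _ _) (fun i hi => ?_) (fun i hi => ?_)
    · have hi := (Finset.mem_filter.1 hi).2
      exact ⟨hi, hi.trans (monoA i h)⟩
    · have hi := (Finset.mem_filter.1 hi).2
      exact ⟨(monoB i h).trans hi, hi⟩
  · refine key _ _ _ _ (min_le_right _ _) (min_le_left _ _) (fun i hi => ?_) (fun i hi => ?_)
    · have hi := (Finset.mem_filter.1 hi).2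
      exact ⟨hi.trans (monoA i h), hi⟩
    · have hi := (Finset.mem_filter.1 hi).2
      exact ⟨hi, (monoB i h).trans hi⟩
end

section
/- Let n ≥ 1, κ > 1, and let d, r ∈ ℝ^n have strictly positive entries, and assume (max_i d_i/r_i)/(min_i d_i/r_i) > κ. Then g has a unique global minimizer: if l₁* and l₂* both attain the minimum value of g, then l₁* = l₂*. -/
/-!
Writing `x⁺ = max x 0`, one has `g l = ∑ i, ((r i * l - d i)⁺ ^ 2 + (d i - κ * r i * l)⁺ ^ 2)`, a sum of
convex functions. The function `x ↦ (x⁺) ^ 2` is strictly midpoint convex on pairs whose larger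
member is positive (`sq_posPart_midpoint_lt`). For `l₁ < l₂`, either `l₂ > lmin`, and the first
summand at an index attaining `lmin` is strict, or `l₂ ≤ lmin`, whence `κ * l₁ < κ * lmin < lmax`, and
the second summand at an index attaining `lmax` is strict. So `g` is strictly midpoint convex on all
of `ℝ`, and two distinct minimizers would be beaten by their midpoint.
-/

open Finset

lemma sq_posPart_midpoint_le (a b : ℝ) :
    2 * (max ((a + b) / 2) 0) ^ 2 ≤ (max a 0) ^ 2 + (max b 0) ^ 2 := by
  have h : max ((a + b) / 2) 0 ≤ (max a 0 + max b 0) / 2 := by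
    apply max_le
    · linarith [le_max_left a 0, le_max_left b 0]
    · linarith [le_max_right a 0, le_max_right b 0]
  have h0 : 0 ≤ max ((a + b) / 2) 0 := le_max_right _ _
  nlinarith [sq_nonneg (max a 0 - max b 0)]

lemma sq_posPart_midpoint_lt {a b : ℝ} (hab : a < b) (hb : 0 < b) :
    2 * (max ((a + b) / 2) 0) ^ 2 < (max a 0) ^ 2 + (max b 0) ^ 2 := by
  have h : max ((a + b) / 2) 0 ≤ (max a 0 + max b 0) / 2 := by
    apply max_le
    · linarith [le_max_left a 0, le_max_left b 0]
    · linarith [le_max_right a 0, le_max_right b 0]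
  have h0 : 0 ≤ max ((a + b) / 2) 0 := le_max_right _ _
  have hne : max a 0 < max b 0 := lt_max_of_lt_left (max_lt hab hb)
  nlinarith [sq_pos_of_pos (sub_pos.2 hne)]

/-- The `i`-th contribution to `g`: the squared distance from `d` to the interval `[r l, κ r l]`
when `1 ≤ κ`, `0 ≤ r` and `0 ≤ l`. -/
noncomputable def gTerm (κ d r l : ℝ) : ℝ :=
  (max (r * l - d) 0) ^ 2 + (max (d - κ * r * l) 0) ^ 2

lemma sum_filter_eq_sum_gTerm {n : ℕ} (κ : ℝ) (d r : Fin n → ℝ) (l : ℝ) :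
    (∑ i ∈ Finset.univ.filter (fun i => d i ≤ l * r i), (d i - r i * l) ^ 2) +
      ∑ i ∈ Finset.univ.filter (fun i => κ * l * r i ≤ d i), (d i - κ * r i * l) ^ 2 =
    ∑ i, gTerm κ (d i) (r i) l := by
  simp only [gTerm, Finset.sum_filter, ← Finset.sum_add_distrib]
  refine Finset.sum_congr rfl fun i _ => ?_
  congr 1
  · split_ifs with h
    · rw [max_eq_left (by linarith)]; ring
    · rw [max_eq_right (by linarith)]; ring
  · split_ifs with h
    · rw [max_eq_left (by linarith)]
    · rw [max_eq_right (by linarith)]; ring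

lemma gTerm_midpoint_le (κ d r l₁ l₂ : ℝ) :
    2 * gTerm κ d r ((l₁ + l₂) / 2) ≤ gTerm κ d r l₁ + gTerm κ d r l₂ := by
  have h1 := sq_posPart_midpoint_le (r * l₁ - d) (r * l₂ - d)
  have h2 := sq_posPart_midpoint_le (d - κ * r * l₁) (d - κ * r * l₂)
  rw [show (r * l₁ - d + (r * l₂ - d)) / 2 = r * ((l₁ + l₂) / 2) - d by ring] at h1
  rw [show (d - κ * r * l₁ + (d - κ * r * l₂)) / 2 = d - κ * r * ((l₁ + l₂) / 2) by ring] at h2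
  unfold gTerm
  linarith

/-- Strictness holds as soon as the increasing part is active at the right endpoint or the
decreasing part is active at the left endpoint. -/
lemma gTerm_midpoint_lt {κ d r l₁ l₂ : ℝ} (hκ : 0 < κ) (hr : 0 < r) (hl : l₁ < l₂)
    (h : d < r * l₂ ∨ κ * r * l₁ < d) :
    2 * gTerm κ d r ((l₁ + l₂) / 2) < gTerm κ d r l₁ + gTerm κ d r l₂ := by
  have hrl : r * l₁ < r * l₂ := mul_lt_mul_of_pos_left hl hr
  have hκl : κ * r * l₁ < κ * r * l₂ := mul_lt_mul_of_pos_left hl (mul_pos hκ hr)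
  have h1 := sq_posPart_midpoint_le (r * l₁ - d) (r * l₂ - d)
  have h2 := sq_posPart_midpoint_le (d - κ * r * l₂) (d - κ * r * l₁)
  have e1 : (r * l₁ - d + (r * l₂ - d)) / 2 = r * ((l₁ + l₂) / 2) - d := by ring
  have e2 : (d - κ * r * l₂ + (d - κ * r * l₁)) / 2 = d - κ * r * ((l₁ + l₂) / 2) := by ring
  unfold gTerm
  rcases h with h | h
  · have h3 := sq_posPart_midpoint_lt (a := r * l₁ - d) (b := r * l₂ - d)
      (by linarith) (by linarith)
    rw [e1] at h3
    rw [e2] at h2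
    linarith
  · have h3 := sq_posPart_midpoint_lt (a := d - κ * r * l₂) (b := d - κ * r * l₁)
      (by linarith) (by linarith)
    rw [e1] at h1
    rw [e2] at h3
    linarith

/-- Under the ratio condition `(max_i d_i/r_i)/(min_i d_i/r_i) > κ`, the function `g`
has a unique global minimizer. -/
theorem g_unique_minimizer (n : ℕ) (hn : 1 ≤ n) (κ : ℝ) (hκ : 1 < κ)
    (d r : Fin n → ℝ) (hd : ∀ i, 0 < d i) (hr : ∀ i, 0 < r i)
    (g : ℝ → ℝ)
    (hg : ∀ l : ℝ, g l =
      (∑ i ∈ Finset.univ.filter (fun i => d i ≤ l * r i), (d i - r i * l) ^ 2) +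
      ∑ i ∈ Finset.univ.filter (fun i => κ * l * r i ≤ d i), (d i - κ * r i * l) ^ 2)
    (lmin lmax : ℝ)
    (hlmin : IsLeast (Set.range fun i => d i / r i) lmin)
    (hlmax : IsGreatest (Set.range fun i => d i / r i) lmax)
    (hratio : κ < lmax / lmin)
    (l₁ l₂ : ℝ)
    (h₁ : ∀ l : ℝ, g l₁ ≤ g l)
    (h₂ : ∀ l : ℝ, g l₂ ≤ g l) :
    l₁ = l₂ := by
  simp only [sum_filter_eq_sum_gTerm] at hg
  obtain ⟨⟨i, hi⟩, -⟩ := hlmin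
  obtain ⟨⟨j, hj⟩, -⟩ := hlmax
  have hi' : d i = lmin * r i := by rw [← hi]; exact (div_mul_cancel₀ _ (hr i).ne').symm
  have hj' : d j = lmax * r j := by rw [← hj]; exact (div_mul_cancel₀ _ (hr j).ne').symm
  have hpos : 0 < lmin := by rw [← hi]; exact div_pos (hd i) (hr i)
  have hκ0 : 0 < κ := by linarith
  have hκl : κ * lmin < lmax := (lt_div_iff₀ hpos).1 hratio
  have key : ∀ x y : ℝ, x < y → 2 * g ((x + y) / 2) < g x + g y := by
    intro x y hxy
    rw [hg, hg, hg, Finset.mul_sum, ← Finset.sum_add_distrib]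
    refine Finset.sum_lt_sum (fun k _ => gTerm_midpoint_le _ _ _ _ _) ?_
    by_cases hy : lmin < y
    · refine ⟨i, Finset.mem_univ i, gTerm_midpoint_lt hκ0 (hr i) hxy (Or.inl ?_)⟩
      rw [hi', mul_comm]
      exact mul_lt_mul_of_pos_left hy (hr i)
    · refine ⟨j, Finset.mem_univ j, gTerm_midpoint_lt hκ0 (hr j) hxy (Or.inr ?_)⟩
      have hx : κ * x < lmax :=
        (mul_lt_mul_of_pos_left (hxy.trans_le (not_lt.1 hy)) hκ0).trans hκl
      have := mul_lt_mul_of_pos_right hx (hr j)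
      rw [hj']
      linarith
  have e : g l₁ = g l₂ := le_antisymm (h₁ _) (h₂ _)
  rcases lt_trichotomy l₁ l₂ with h | h | h
  · linarith [key _ _ h, h₁ ((l₁ + l₂) / 2)]
  · exact h
  · linarith [key _ _ h, h₁ ((l₂ + l₁) / 2)]
end
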